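/- Let p and q be restriction-free FNM processes. If p ~sp q, then p | r ~sp q | r for every restriction-free FNM process r. (Structure-preserving bisimilarity is a congruence for parallel composition.) -/

import Mathlib

/-- Actions of FNM: the invisible action τ, input actions `a ∈ L` and
output actions `ā ∈ L̄` (here `α` plays the role of the finite set `L`). -/
inductive Act (α : Type) where
  | tau : Act α
  | inp : α → Act α
  | out : α → Act α
  deriving DecidableEq

/-- (Open) FNM terms: `0`, the variable `x`, action prefixing `mu.t`, strong
prefixing `a̲.s`, choice `s+s`, constants `C`, parallel `t|t` and
restriction `(νa)p`.  The syntactic categories are carved out below. -/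
inductive FNM (α κ : Type) where
  | nil : FNM α κ
  | var : FNM α κ
  | pref : Act α → FNM α κ → FNM α κ
  | spref : α → FNM α κ → FNM α κ
  | sum : FNM α κ → FNM α κ → FNM α κ
  | const : κ → FNM α κ
  | par : FNM α κ → FNM α κ → FNM α κ
  | res : α → FNM α κ → FNM α κ
  deriving DecidableEq

namespace FNM

variable {α κ : Type}

mutual
  /-- Guarded terms: syntactic category `s ::= 0 | mu.t | a̲.s | s+s`
  (with `t` restriction-free). -/
  def Grd : FNM α κ → Prop
    | .nil => True
    | .var => False
    | .pref _ t => RF t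
    | .spref _ s => Grd s
    | .sum s1 s2 => Grd s1 ∧ Grd s2
    | .const _ => False
    | .par _ _ => False
    | .res _ _ => False
  /-- Restriction-free terms: syntactic category `t ::= q | t|t`, where
  `q ::= s | C | x` is the category of sequential terms. -/
  def RF : FNM α κ → Prop
    | .nil => True
    | .var => True
    | .pref _ t => RF t
    | .spref _ s => Grd s
    | .sum s1 s2 => Grd s1 ∧ Grd s2
    | .const _ => True
    | .par t1 t2 => RF t1 ∧ RF t2
    | .res _ _ => False
end

/-- Sequential terms: `q ::= s | C | x`. -/
def Seq (t : FNM α κ) : Prop :=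
  Grd t ∨ (∃ c, t = FNM.const c) ∨ t = FNM.var

/-- General terms: `p ::= t | (νa)p`. -/
def Gen : FNM α κ → Prop
  | .res _ p => Gen p
  | t => RF t

/-- Closed terms: no occurrence of the variable. -/
def VarFree : FNM α κ → Prop
  | .nil => True
  | .var => False
  | .pref _ t => VarFree t
  | .spref _ s => VarFree s
  | .sum s1 s2 => VarFree s1 ∧ VarFree s2
  | .const _ => True
  | .par t1 t2 => VarFree t1 ∧ VarFree t2
  | .res _ p => VarFree p

/-- Substitution `p{r/x}` of the term `r` for every occurrence of the
variable `x` in `p` (constants are dealt with via the environment). -/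
def subst (r : FNM α κ) : FNM α κ → FNM α κ
  | .nil => .nil
  | .var => r
  | .pref mu t => .pref mu (subst r t)
  | .spref a s => .spref a (subst r s)
  | .sum s1 s2 => .sum (subst r s1) (subst r s2)
  | .const c => .const c
  | .par t1 t2 => .par (subst r t1) (subst r t2)
  | .res a p => .res a (subst r p)

/-- `mu` uses the name `a`. -/
def _root_.Act.uses (a : α) : Act α → Prop
  | .tau => False
  | .inp b => b = a
  | .out b => b = a

/-- `a` occurs free in a term (through an environment `env` giving the body
of each process constant). -/
inductive FreeIn (env : κ → FNM α κ) (a : α) : FNM α κ → Prop where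
  | pref_act {mu : Act α} {t : FNM α κ} : mu.uses a → FreeIn env a (.pref mu t)
  | pref_cont {mu : Act α} {t : FNM α κ} : FreeIn env a t → FreeIn env a (.pref mu t)
  | spref_act {s : FNM α κ} : FreeIn env a (.spref a s)
  | spref_cont {b : α} {s : FNM α κ} : FreeIn env a s → FreeIn env a (.spref b s)
  | sum_l {s1 s2 : FNM α κ} : FreeIn env a s1 → FreeIn env a (.sum s1 s2)
  | sum_r {s1 s2 : FNM α κ} : FreeIn env a s2 → FreeIn env a (.sum s1 s2)
  | par_l {t1 t2 : FNM α κ} : FreeIn env a t1 → FreeIn env a (.par t1 t2)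
  | par_r {t1 t2 : FNM α κ} : FreeIn env a t2 → FreeIn env a (.par t1 t2)
  | res {b : α} {p : FNM α κ} : a ≠ b → FreeIn env a p → FreeIn env a (.res b p)
  | const {c : κ} : FreeIn env a (env c) → FreeIn env a (.const c)

/-- `a` occurs bound (by a restriction) in a term. -/
inductive BoundIn (env : κ → FNM α κ) (a : α) : FNM α κ → Prop where
  | res_here {p : FNM α κ} : BoundIn env a (.res a p)
  | res_in {b : α} {p : FNM α κ} : BoundIn env a p → BoundIn env a (.res b p)
  | pref {mu : Act α} {t : FNM α κ} : BoundIn env a t → BoundIn env a (.pref mu t)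
  | spref {b : α} {s : FNM α κ} : BoundIn env a s → BoundIn env a (.spref b s)
  | sum_l {s1 s2 : FNM α κ} : BoundIn env a s1 → BoundIn env a (.sum s1 s2)
  | sum_r {s1 s2 : FNM α κ} : BoundIn env a s2 → BoundIn env a (.sum s1 s2)
  | par_l {t1 t2 : FNM α κ} : BoundIn env a t1 → BoundIn env a (.par t1 t2)
  | par_r {t1 t2 : FNM α κ} : BoundIn env a t2 → BoundIn env a (.par t1 t2)
  | const {c : κ} : BoundIn env a (env c) → BoundIn env a (.const c)

end FNM

/-- A place of the net `N_FNM`: a sequential (extended) term, rendered as a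
pure sequential term together with the record `ρ : α → Bool` of which names
have been replaced by their restricted counterparts (`ρ a = true` represents
the substitution `{a'/a}`). -/
abbrev Place (α κ : Type) := FNM α κ × (α → Bool)

namespace FNM

variable {α κ : Type} [DecidableEq α] [DecidableEq κ] [Fintype α]

/-- The decomposition function `dec`, mapping (extended) terms to markings:
`dec(0) = θ`, `dec(p|q) = dec(p) ⊕ dec(q)`, `dec((νa)p) = dec(p){a'/a}`, and
a sequential term other than `0` is mapped to a single place. -/
def dec (ρ : α → Bool) : FNM α κ → Multiset (Place α κ)
  | .nil => 0
  | .par t1 t2 => dec ρ t1 + dec ρ t2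
  | .res a p => dec (Function.update ρ a true) p
  | t => {(t, ρ)}

end FNM

/-- Extended visible actions: inputs and outputs, possibly restricted
(`inp a true` represents `a'`, `out a false` represents `ā`, etc.). -/
inductive XAct (α : Type) where
  | inp : α → Bool → XAct α
  | out : α → Bool → XAct α

/-- Labels of net transitions: `τ` is the empty sequence, and otherwise a
sequence of extended actions. -/
abbrev Lbl (α : Type) := List (XAct α)

/-- An extended action carries no restricted name. -/
def XAct.unres {α : Type} : XAct α → Prop
  | .inp _ r => r = false
  | .out _ r => r = false

/-- The label contributed by prefix `mu` under the restriction record `ρ`. -/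
def actL {α : Type} (ρ : α → Bool) : Act α → Lbl α
  | .tau => []
  | .inp a => [XAct.inp a (ρ a)]
  | .out a => [XAct.out a (ρ a)]

/-- The synchronization relation `Sync(σ1, σ2, σ)`: `Sync(α, ᾱ, τ)`,
`Sync(aσ, ā, σ)` and `Sync(ā, aσ, σ)` for `σ ≠ ε` (also on restricted
actions). -/
inductive Sync {α : Type} : Lbl α → Lbl α → Lbl α → Prop where
  | inout (a : α) (r : Bool) : Sync [XAct.inp a r] [XAct.out a r] []
  | outin (a : α) (r : Bool) : Sync [XAct.out a r] [XAct.inp a r] []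
  | seqL (a : α) (r : Bool) (σ : Lbl α) :
      σ ≠ [] → Sync (XAct.inp a r :: σ) [XAct.out a r] σ
  | seqR (a : α) (r : Bool) (σ : Lbl α) :
      σ ≠ [] → Sync [XAct.out a r] (XAct.inp a r :: σ) σ

namespace FNM

variable {α κ : Type} [DecidableEq α] [DecidableEq κ] [Fintype α]

/-- A marking is admissible if for no name `a` both `a` and its restricted
counterpart `a'` occur free in it. -/
def Adm (env : κ → FNM α κ) (m : Multiset (Place α κ)) : Prop :=
  ∀ a : α, ¬ ((∃ p ∈ m, FreeIn env a p.1 ∧ p.2 a = false) ∧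
              (∃ p ∈ m, FreeIn env a p.1 ∧ p.2 a = true))

/-- The net transitions of `N_FNM`, generated by the rules (pref), (sum₁),
(sum₂), (cons), (s-pref) and (s-com). -/
inductive Tr (env : κ → FNM α κ) :
    Multiset (Place α κ) → Lbl α → Multiset (Place α κ) → Prop where
  | pref (ρ : α → Bool) (mu : Act α) (t : FNM α κ) :
      Tr env {(FNM.pref mu t, ρ)} (actL ρ mu) (dec ρ t)
  | sum1 (ρ : α → Bool) (s1 s2 : FNM α κ) (σ : Lbl α) (m : Multiset (Place α κ)) :
      Tr env (dec ρ s1) σ m → Tr env {(FNM.sum s1 s2, ρ)} σ m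
  | sum2 (ρ : α → Bool) (s1 s2 : FNM α κ) (σ : Lbl α) (m : Multiset (Place α κ)) :
      Tr env (dec ρ s2) σ m → Tr env {(FNM.sum s1 s2, ρ)} σ m
  | cons (ρ : α → Bool) (c : κ) (σ : Lbl α) (m : Multiset (Place α κ)) :
      Tr env (dec ρ (env c)) σ m → Tr env {(FNM.const c, ρ)} σ m
  | spref (ρ : α → Bool) (a : α) (s : FNM α κ) (σ : Lbl α) (m : Multiset (Place α κ)) :
      Tr env (dec ρ s) σ m →
      Tr env {(FNM.spref a s, ρ)} (XAct.inp a (ρ a) :: σ) m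
  | scom (m1 m2 m1' m2' : Multiset (Place α κ)) (σ1 σ2 σ : Lbl α) :
      Tr env m1 σ1 m1' → Tr env m2 σ2 m2' →
      Adm env (m1 + m2) → Sync σ1 σ2 σ →
      Tr env (m1 + m2) σ (m1' + m2')

/-- Tritions of the net `N_FNM`: only those whose label contains no
restricted action are kept. -/
def NetTr (env : κ → FNM α κ) (m : Multiset (Place α κ)) (σ : Lbl α)
    (m' : Multiset (Place α κ)) : Prop :=
  Tr env m σ m' ∧ ∀ x ∈ σ, x.unres

/-- First projection of a linking. -/
def pi1 (l : Multiset (Place α κ × Place α κ)) : Multiset (Place α κ) :=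
  l.map Prod.fst

/-- Second projection of a linking. -/
def pi2 (l : Multiset (Place α κ × Place α κ)) : Multiset (Place α κ) :=
  l.map Prod.snd

/-- Structure-preserving bisimulation on the net `N_FNM`. -/
def IsSPB (env : κ → FNM α κ) (R : Set (Multiset (Place α κ × Place α κ))) : Prop :=
  ∀ l ∈ R, ∀ c ≤ l,
    (∀ σ m1, NetTr env (pi1 c) σ m1 →
      ∃ m2 cb, NetTr env (pi2 c) σ m2 ∧
        pi1 cb = m1 ∧ pi2 cb = m2 ∧ l - c + cb ∈ R) ∧
    (∀ σ m2, NetTr env (pi2 c) σ m2 →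
      ∃ m1 cb, NetTr env (pi1 c) σ m1 ∧
        pi1 cb = m1 ∧ pi2 cb = m2 ∧ l - c + cb ∈ R)

/-- `p ~sp q`: some structure-preserving bisimulation contains a linking
projecting on `dec(p)` and `dec(q)`. -/
def SPEq (env : κ → FNM α κ) (p q : FNM α κ) : Prop :=
  ∃ R, IsSPB env R ∧ ∃ l ∈ R,
    pi1 l = dec (fun _ => false) p ∧ pi2 l = dec (fun _ => false) q

end FNM

set_option linter.unusedSectionVars false

namespace FNM

variable {α κ : Type} [DecidableEq α] [DecidableEq κ] [Fintype α]

/-- restriction-free place without restricted names -/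
def GoodP (x : Place α κ) : Prop := RF x.1 ∧ x.2 = fun _ => false

theorem rf_of_grd (t : FNM α κ) (h : Grd t) : RF t := by
  cases t <;> simp_all [Grd, RF]

theorem good_dec (t : FNM α κ) (h : RF t) :
    ∀ x ∈ dec (fun _ => false) t, GoodP x := by
  induction t with
  | nil => simp [dec]
  | par t1 t2 h1 h2 =>
    simp only [RF] at h
    intro x hx
    simp only [dec, Multiset.mem_add] at hx
    rcases hx with hx | hx
    · exact h1 h.1 x hx
    · exact h2 h.2 x hx
  | res a p => simp [RF] at h
  | _ =>
    intro x hx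
    simp only [dec, Multiset.mem_singleton] at hx
    subst hx
    exact ⟨h, rfl⟩

theorem good_tr (env : κ → FNM α κ) (henv : ∀ c, Grd (env c))
    {m : Multiset (Place α κ)} {σ : Lbl α} {m' : Multiset (Place α κ)}
    (h : Tr env m σ m') (hm : ∀ x ∈ m, GoodP x) :
    (∀ x ∈ m', GoodP x) ∧ ∀ x ∈ σ, x.unres := by
  induction h with
  | pref ρ mu t =>
    obtain ⟨h1, h2⟩ := hm _ (Multiset.mem_singleton_self _)
    simp only [RF] at h1 h2
    subst h2
    refine ⟨good_dec t h1, ?_⟩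
    cases mu <;> simp [actL, XAct.unres]
  | sum1 ρ s1 s2 σ m _ ih =>
    obtain ⟨h1, h2⟩ := hm _ (Multiset.mem_singleton_self _)
    simp only [RF] at h1 h2
    subst h2
    exact ih (good_dec _ (rf_of_grd _ h1.1))
  | sum2 ρ s1 s2 σ m _ ih =>
    obtain ⟨h1, h2⟩ := hm _ (Multiset.mem_singleton_self _)
    simp only [RF] at h1 h2
    subst h2
    exact ih (good_dec _ (rf_of_grd _ h1.2))
  | cons ρ c σ m _ ih =>
    obtain ⟨h1, h2⟩ := hm _ (Multiset.mem_singleton_self _)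
    simp only at h2
    subst h2
    exact ih (good_dec _ (rf_of_grd _ (henv c)))
  | spref ρ a s σ m _ ih =>
    obtain ⟨h1, h2⟩ := hm _ (Multiset.mem_singleton_self _)
    simp only [RF] at h1 h2
    subst h2
    obtain ⟨i1, i2⟩ := ih (good_dec _ (rf_of_grd _ h1))
    refine ⟨i1, ?_⟩
    intro x hx
    rcases List.mem_cons.1 hx with rfl | hx
    · simp [XAct.unres]
    · exact i2 x hx
  | scom m1 m2 m1' m2' σ1 σ2 σ _ _ _ hs ih1 ih2 =>
    obtain ⟨a1, a2⟩ := ih1 (fun x hx => hm x (Multiset.mem_add.2 (Or.inl hx)))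
    obtain ⟨b1, b2⟩ := ih2 (fun x hx => hm x (Multiset.mem_add.2 (Or.inr hx)))
    refine ⟨fun x hx => (Multiset.mem_add.1 hx).elim (a1 x) (b1 x), ?_⟩
    cases hs with
    | inout => simp
    | outin => simp
    | seqL => exact fun x hx => a2 x (List.mem_cons_of_mem _ hx)
    | seqR => exact fun x hx => b2 x (List.mem_cons_of_mem _ hx)

theorem adm_good (env : κ → FNM α κ) (m : Multiset (Place α κ))
    (hm : ∀ x ∈ m, GoodP x) : Adm env m := by
  rintro a ⟨_, p, hp, _, h⟩
  rw [(hm p hp).2] at h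
  simp at h

abbrev Linking (α κ : Type) := Multiset (Place α κ × Place α κ)

/-- identity linking -/
def idL (m : Multiset (Place α κ)) : Linking α κ := m.map (fun x => (x, x))

/-- closure of `R` under identity linkings, restricted to good linkings -/
def ExtR (R : Set (Linking α κ)) : Set (Linking α κ) :=
  {l | (∃ l0 ∈ R, ∃ m, l = l0 + idL m) ∧ ∀ z ∈ l, GoodP z.1 ∧ GoodP z.2}

def Fwd (env : κ → FNM α κ) (R : Set (Linking α κ)) : Prop :=
  ∀ l ∈ R, ∀ c ≤ l, ∀ σ m1, NetTr env (pi1 c) σ m1 →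
      ∃ m2 cb, NetTr env (pi2 c) σ m2 ∧
        pi1 cb = m1 ∧ pi2 cb = m2 ∧ l - c + cb ∈ R

theorem good_link {c : Linking α κ} (h1 : ∀ x ∈ pi1 c, GoodP x)
    (h2 : ∀ x ∈ pi2 c, GoodP x) : ∀ z ∈ c, GoodP z.1 ∧ GoodP z.2 :=
  fun _ hz => ⟨h1 _ (Multiset.mem_map_of_mem _ hz), h2 _ (Multiset.mem_map_of_mem _ hz)⟩

theorem good_pi1 {c : Linking α κ} (h : ∀ z ∈ c, GoodP z.1 ∧ GoodP z.2) :
    ∀ x ∈ pi1 c, GoodP x := by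
  intro x hx
  obtain ⟨z, hz, rfl⟩ := Multiset.mem_map.1 hx
  exact (h z hz).1

theorem good_pi2 {c : Linking α κ} (h : ∀ z ∈ c, GoodP z.1 ∧ GoodP z.2) :
    ∀ x ∈ pi2 c, GoodP x := by
  intro x hx
  obtain ⟨z, hz, rfl⟩ := Multiset.mem_map.1 hx
  exact (h z hz).2

theorem pi1_idL (m : Multiset (Place α κ)) : pi1 (idL m) = m := by
  simp [pi1, idL]

theorem pi2_idL (m : Multiset (Place α κ)) : pi2 (idL m) = m := by
  simp [pi2, idL]

theorem step_single (env : κ → FNM α κ) (henv : ∀ c, Grd (env c))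
    (R : Set (Linking α κ)) (hR : Fwd env R) (l : Linking α κ) (hl : l ∈ ExtR R)
    (c : Linking α κ) (hc : c ≤ l) (x : Place α κ) (hx : pi1 c = {x})
    (σ : Lbl α) (m1 : Multiset (Place α κ)) (ht : Tr env {x} σ m1) :
    ∃ m2 cb, Tr env (pi2 c) σ m2 ∧ pi1 cb = m1 ∧ pi2 cb = m2 ∧ l - c + cb ∈ ExtR R := by
  obtain ⟨⟨l0, hl0, m, rfl⟩, hg⟩ := hl
  obtain ⟨z, rfl, rfl⟩ := Multiset.map_eq_singleton.1 hx
  have hz := Multiset.singleton_le.1 hc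
  have hgz := hg z hz
  have hgt := good_tr env henv ht (by simpa using hgz.1)
  have key : ∀ cb : Linking α κ, (∀ w ∈ cb, GoodP w.1 ∧ GoodP w.2) →
      ∀ w ∈ (l0 + idL m) - {z} + cb, GoodP w.1 ∧ GoodP w.2 := by
    intro cb hcb w hw
    rcases Multiset.mem_add.1 hw with hw | hw
    · exact hg w (Multiset.mem_of_le (Multiset.sub_le_self _ _) hw)
    · exact hcb w hw
  rcases Multiset.mem_add.1 hz with h0 | h0
  · have hle : ({z} : Linking α κ) ≤ l0 := Multiset.singleton_le.2 h0
    obtain ⟨m2, cb, ht2, e1, e2, hm⟩ := hR l0 hl0 {z} hle σ m1 ⟨by simpa [pi1] using ht, hgt.2⟩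
    refine ⟨m2, cb, ht2.1, e1, e2, ⟨_, hm, m, ?_⟩, ?_⟩
    · obtain ⟨d, rfl⟩ := Multiset.le_iff_exists_add.1 hle
      rw [add_assoc, add_tsub_cancel_left, add_tsub_cancel_left, add_right_comm]
    · apply key
      apply good_link
      · rw [e1]; exact hgt.1
      · rw [e2]; exact (good_tr env henv ht2.1 (by simpa [pi2] using hgz.2)).1
  · obtain ⟨y, hy, rfl⟩ := Multiset.mem_map.1 h0
    refine ⟨m1, idL m1, by simpa [pi2] using ht, pi1_idL _, pi2_idL _,
      ⟨l0, hl0, m - {y} + m1, ?_⟩, ?_⟩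
    · obtain ⟨m', rfl⟩ := Multiset.exists_cons_of_mem hy
      have e : idL (y ::ₘ m') = {(y, y)} + idL m' := by simp [idL]
      have e2 : y ::ₘ m' - {y} = m' := by simp
      rw [e, e2, ← add_assoc, add_right_comm, add_tsub_cancel_right]
      simp [idL, add_assoc]
    · apply key
      apply good_link
      · rw [pi1_idL]; exact hgt.1
      · rw [pi2_idL]; exact hgt.1

theorem map_split {β γ : Type} (f : β → γ) (m1 m2 : Multiset γ) :
    ∀ c : Multiset β, c.map f = m1 + m2 →
    ∃ c1 c2, c = c1 + c2 ∧ c1.map f = m1 ∧ c2.map f = m2 := by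
  induction m1 using Multiset.induction with
  | empty => intro c h; exact ⟨0, c, by simp, by simp, by simpa using h⟩
  | cons a m1 ih =>
    intro c h
    have ha : a ∈ c.map f := by rw [h]; simp
    obtain ⟨b, hb, rfl⟩ := Multiset.mem_map.1 ha
    obtain ⟨c', rfl⟩ := Multiset.exists_cons_of_mem hb
    obtain ⟨c1, c2, rfl, h1, h2⟩ := ih c' (by simpa using h)
    exact ⟨b ::ₘ c1, c2, by simp, by simp [h1], h2⟩

theorem step_gen (env : κ → FNM α κ) (henv : ∀ c, Grd (env c))
    (R : Set (Linking α κ)) (hR : Fwd env R)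
    (m : Multiset (Place α κ)) (σ : Lbl α) (m1 : Multiset (Place α κ)) (ht : Tr env m σ m1) :
    ∀ l ∈ ExtR R, ∀ c ≤ l, pi1 c = m →
    ∃ m2 cb, Tr env (pi2 c) σ m2 ∧ pi1 cb = m1 ∧ pi2 cb = m2 ∧ l - c + cb ∈ ExtR R := by
  induction ht with
  | pref ρ mu t =>
    exact fun l hl c hc hx => step_single env henv R hR l hl c hc _ hx _ _ (Tr.pref ρ mu t)
  | sum1 ρ s1 s2 σ m h _ =>
    exact fun l hl c hc hx => step_single env henv R hR l hl c hc _ hx _ _ (Tr.sum1 _ _ _ _ _ h)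
  | sum2 ρ s1 s2 σ m h _ =>
    exact fun l hl c hc hx => step_single env henv R hR l hl c hc _ hx _ _ (Tr.sum2 _ _ _ _ _ h)
  | cons ρ k σ m h _ =>
    exact fun l hl c hc hx => step_single env henv R hR l hl c hc _ hx _ _ (Tr.cons _ _ _ _ h)
  | spref ρ a s σ m h _ =>
    exact fun l hl c hc hx => step_single env henv R hR l hl c hc _ hx _ _ (Tr.spref _ _ _ _ _ h)
  | scom m1 m2 m1' m2' σ1 σ2 σ _ _ _ hs ih1 ih2 =>
    intro l hl c hc hx
    obtain ⟨c1, c2, rfl, h1, h2⟩ := map_split Prod.fst m1 m2 c hx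
    obtain ⟨d, rfl⟩ := Multiset.le_iff_exists_add.1 hc
    have hgc := good_pi2 (fun z hz => hl.2 z (Multiset.mem_of_le hc hz))
    obtain ⟨n1, b1, t1, e1, f1, r1⟩ := ih1 _ hl c1 (by rw [add_assoc]; exact Multiset.le_add_right _ _) h1
    have q1 : c1 + c2 + d - c1 + b1 = c2 + (d + b1) := by
      rw [add_assoc, add_tsub_cancel_left, add_assoc]
    rw [q1] at r1
    obtain ⟨n2, b2, t2, e2, f2, r2⟩ := ih2 _ r1 c2 (Multiset.le_add_right _ _) h2
    have q2 : c1 + c2 + d - (c1 + c2) + (b1 + b2) = c2 + (d + b1) - c2 + b2 := by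
      rw [add_tsub_cancel_left, add_tsub_cancel_left, add_assoc]
    have q3 : pi2 (c1 + c2) = pi2 c1 + pi2 c2 := Multiset.map_add _ _ _
    rw [q3] at hgc ⊢
    refine ⟨n1 + n2, b1 + b2, Tr.scom _ _ _ _ σ1 σ2 σ t1 t2 (adm_good env _ hgc) hs, ?_, ?_, ?_⟩
    · rw [← e1, ← e2]; exact Multiset.map_add _ _ _
    · rw [← f1, ← f2]; exact Multiset.map_add _ _ _
    · rw [q2]; exact r2

theorem fwd_ext (env : κ → FNM α κ) (henv : ∀ c, Grd (env c))
    (R : Set (Linking α κ)) (hR : Fwd env R) : Fwd env (ExtR R) := by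
  intro l hl c hc σ m1 ht
  obtain ⟨m2, cb, h1, h2, h3, h4⟩ := step_gen env henv R hR _ σ m1 ht.1 l hl c hc rfl
  exact ⟨m2, cb, ⟨h1, ht.2⟩, h2, h3, h4⟩

/-- swapped linking -/
def sw (l : Linking α κ) : Linking α κ := l.map Prod.swap

theorem sw_sw (l : Linking α κ) : sw (sw l) = l := by simp [sw]
theorem sw_add (l k : Linking α κ) : sw (l + k) = sw l + sw k := Multiset.map_add _ _ _
theorem sw_sub (l k : Linking α κ) : sw (l - k) = sw l - sw k := by
  ext a
  obtain ⟨b, rfl⟩ := Prod.swap_surjective a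
  simp only [sw, Multiset.count_sub, Multiset.count_map_eq_count' _ _ Prod.swap_injective]
theorem pi1_sw (l : Linking α κ) : pi1 (sw l) = pi2 l := by simp [sw, pi1, pi2]
theorem pi2_sw (l : Linking α κ) : pi2 (sw l) = pi1 l := by simp [sw, pi1, pi2]
theorem sw_idL (m : Multiset (Place α κ)) : sw (idL m) = idL m := by simp [sw, idL]
theorem sw_le {l k : Linking α κ} (h : l ≤ k) : sw l ≤ sw k := Multiset.map_le_map h

theorem spb_iff (env : κ → FNM α κ) (R : Set (Linking α κ)) :
    IsSPB env R ↔ Fwd env R ∧ Fwd env (sw ⁻¹' R) := by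
  constructor
  · intro h
    refine ⟨fun l hl c hc => (h l hl c hc).1, fun l hl c hc σ m1 ht => ?_⟩
    obtain ⟨m2, cb, h1, h2, h3, h4⟩ := (h _ hl _ (sw_le hc)).2 σ m1 (by rwa [pi2_sw])
    refine ⟨m2, sw cb, by rwa [pi1_sw] at h1, by rwa [pi1_sw], by rwa [pi2_sw], ?_⟩
    simpa [sw_add, sw_sub, sw_sw] using h4
  · rintro ⟨h, h'⟩ l hl c hc
    refine ⟨h l hl c hc, fun σ m1 ht => ?_⟩
    obtain ⟨m2, cb, h1, h2, h3, h4⟩ := h' (sw l) (by simpa [sw_sw] using hl) _ (sw_le hc) σ m1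
      (by rwa [pi1_sw])
    refine ⟨m2, sw cb, by rwa [pi2_sw] at h1, by rwa [pi1_sw], by rwa [pi2_sw], ?_⟩
    simpa [sw_add, sw_sub, sw_sw] using h4

theorem good_sw {l : Linking α κ} (h : ∀ z ∈ l, GoodP z.1 ∧ GoodP z.2) :
    ∀ z ∈ sw l, GoodP z.1 ∧ GoodP z.2 := by
  intro z hz
  obtain ⟨w, hw, rfl⟩ := Multiset.mem_map.1 hz
  exact (h w hw).symm

theorem ext_sw (R : Set (Linking α κ)) : sw ⁻¹' (ExtR R) = ExtR (sw ⁻¹' R) := by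
  ext l
  constructor
  · rintro ⟨⟨l0, h0, m, e⟩, hg⟩
    refine ⟨⟨sw l0, by simpa [sw_sw] using h0, m, ?_⟩, by simpa [sw_sw] using good_sw hg⟩
    rw [← sw_sw l, e, sw_add, sw_idL]
  · rintro ⟨⟨l0, h0, m, rfl⟩, hg⟩
    exact ⟨⟨sw l0, h0, m, by rw [sw_add, sw_idL]⟩, good_sw hg⟩

end FNM

open FNM in
/-- structure-preserving bisimilarity is a congruence for
parallel composition: for restriction-free FNM processes `p, q` with
`p ~sp q`, `p | r ~sp q | r` for every restriction-free FNM process `r`. -/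
theorem speq_congr_par {α κ : Type} [DecidableEq α] [DecidableEq κ]
    [Fintype α] [Finite κ]
    (env : κ → FNM α κ) (henv : ∀ c, Grd (env c) ∧ VarFree (env c))
    (p q : FNM α κ) (hp : RF p) (hq : RF q)
    (hpv : VarFree p) (hqv : VarFree q)
    (h : SPEq env p q) :
    ∀ r : FNM α κ, RF r → VarFree r →
      SPEq env (FNM.par p r) (FNM.par q r) := by
  intro r hr _
  obtain ⟨R, hR, l, hl, e1, e2⟩ := h
  obtain ⟨f1, f2⟩ := (spb_iff env R).1 hR
  have henv' := fun c => (henv c).1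
  have q1 : pi1 (l + idL (dec (fun _ => false) r)) = dec (fun _ => false) (FNM.par p r) := by
    have : pi1 (l + idL (dec (fun _ => false) r)) = pi1 l + pi1 (idL (dec (fun _ => false) r)) :=
      Multiset.map_add _ _ _
    rw [this, e1, pi1_idL]; rfl
  have q2 : pi2 (l + idL (dec (fun _ => false) r)) = dec (fun _ => false) (FNM.par q r) := by
    have : pi2 (l + idL (dec (fun _ => false) r)) = pi2 l + pi2 (idL (dec (fun _ => false) r)) :=
      Multiset.map_add _ _ _
    rw [this, e2, pi2_idL]; rfl
  refine ⟨ExtR R, (spb_iff env _).2 ⟨fwd_ext env henv' R f1, ?_⟩, l + idL (dec (fun _ => false) r),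
    ⟨⟨l, hl, _, rfl⟩, good_link ?_ ?_⟩, q1, q2⟩
  · rw [ext_sw]; exact fwd_ext env henv' _ f2
  · rw [q1]; exact good_dec _ (by simp only [RF]; exact ⟨hp, hr⟩)
  · rw [q2]; exact good_dec _ (by simp only [RF]; exact ⟨hq, hr⟩)
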